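/- Let G be a finite simple graph. Then 2 · ∑_{ {u,v} ∉ E(G), u ≠ v } d_u d_v = 2·t(G) + A(G), where the sum runs over unordered pairs of distinct non-adjacent vertices of G. In words: the sum of the products of the degrees over non-adjacent pairs equals the number of 3-element vertex subsets spanning exactly two edges plus half the number of ordered alternating 3-edge paths. -/

import Mathlib

open Finset SimpleGraph
open scoped Classical

/-- The sum of `d_u * d_v` over unordered pairs `{u,v}` of distinct non-adjacent
vertices of `G`. -/
noncomputable def nonEdgeDegSum {n : ℕ} (G : SimpleGraph (Fin n)) : ℕ :=
  ∑ e ∈ (Finset.univ : Finset (Sym2 (Fin n))).filter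
      (fun e => ¬ e.IsDiag ∧ e ∉ G.edgeFinset),
    Sym2.lift ⟨fun u v => G.degree u * G.degree v, fun _ _ => mul_comm _ _⟩ e

/-- `A G` is the number of ordered quadruples `(u,v,w,x)` of pairwise distinct vertices
with `uv`, `wx` edges and `vw` a non-edge (ordered alternating 3-edge paths). -/
noncomputable def A {n : ℕ} (G : SimpleGraph (Fin n)) : ℕ :=
  Finset.card <| (Finset.univ : Finset (Fin n × Fin n × Fin n × Fin n)).filter
    fun p =>
      p.1 ≠ p.2.1 ∧ p.1 ≠ p.2.2.1 ∧ p.1 ≠ p.2.2.2 ∧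
      p.2.1 ≠ p.2.2.1 ∧ p.2.1 ≠ p.2.2.2 ∧ p.2.2.1 ≠ p.2.2.2 ∧
      G.Adj p.1 p.2.1 ∧ G.Adj p.2.2.1 p.2.2.2 ∧ ¬ G.Adj p.2.1 p.2.2.1

/-- `t G` is the number of 3-element vertex subsets of `G` spanning exactly two edges. -/
noncomputable def t {n : ℕ} (G : SimpleGraph (Fin n)) : ℕ :=
  Finset.card <| (Finset.powersetCard 3 (Finset.univ : Finset (Fin n))).filter
    fun S => (G.edgeFinset.filter fun e => ∀ v ∈ e, v ∈ S).card = 2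

/-!
Orient every non-edge `vw` and read `d_v * d_w` as the number of pairs `(u, x)` with `u` a neighbour
of `v` and `x` a neighbour of `w`. The pairs with `u ≠ x` are the alternating paths `(u, v, w, x)`.
The pairs with `u = x` are the common neighbours of `v` and `w`, and these give the triples
`{u, v, w}` spanning exactly two edges. A triple has three pairs of vertices, so one spanning two
edges spans a single non-edge; it is counted once for each of the two orientations of that non-edge.
-/

variable {V : Type*}

section EdgesWithin

variable [DecidableEq V] (G : SimpleGraph V) [DecidableRel G.Adj]

/-- The edges of `G` spanned by the vertex set `S`, i.e. with both ends in `S`. They are cut out of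
`S.sym2`, so that the vertex type may be infinite. -/
def edgesWithin (S : Finset V) : Finset (Sym2 V) :=
  {e ∈ S.sym2 | e ∈ G.edgeSet}

lemma card_edgesWithin_insert {u : V} {S : Finset V} (hu : u ∉ S) :
    #(edgesWithin G (insert u S)) = #{v ∈ S | G.Adj u v} + #(edgesWithin G S) := by
  have h_image : {e ∈ (insert u S).image (s(u, ·)) | e ∈ G.edgeSet} =
      {v ∈ S | G.Adj u v}.image (s(u, ·)) := by
    simp [filter_image, filter_insert]
  have h_disj : Disjoint ({v ∈ S | G.Adj u v}.image (s(u, ·))) (edgesWithin G S) := by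
    refine Finset.disjoint_left.2 fun e h_mem_image h_mem => ?_
    obtain ⟨v, -, rfl⟩ := mem_image.1 h_mem_image
    exact hu (mk_mem_sym2_iff.1 (mem_filter.1 h_mem).1).1
  rw [edgesWithin, sym2_insert, filter_union, h_image, ← edgesWithin,
    card_union_of_disjoint h_disj, card_image_of_injective _ fun _ _ => Sym2.congr_right.1]

lemma card_edgesWithin_add_card_edgesWithin_compl (S : Finset V) :
    #(edgesWithin G S) + #(edgesWithin Gᶜ S) = (#S).choose 2 := by
  induction S using Finset.induction_on with
  | empty => simp [edgesWithin]
  | insert u S hu ih =>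
    have h_split : #{v ∈ S | G.Adj u v} + #{v ∈ S | Gᶜ.Adj u v} = #S := by
      rw [← card_filter_add_card_filter_not (s := S) (G.Adj u)]
      congr 2
      exact filter_congr fun v hv => by simp [ne_of_mem_of_not_mem hv hu |>.symm]
    rw [card_edgesWithin_insert G hu, card_edgesWithin_insert Gᶜ hu, card_insert_of_notMem hu,
      Nat.choose_succ_succ', Nat.choose_one_right, one_add_one_eq_two]
    omega

variable {G}

lemma card_edgesWithin_triple_eq_two_iff {u v w : V} (hvw : Gᶜ.Adj v w)
    (hu : u ∉ ({v, w} : Finset V)) :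
    #(edgesWithin G {u, v, w}) = 2 ↔ G.Adj u v ∧ G.Adj u w := by
  have h_pair : #(edgesWithin G {v, w}) = 0 := by
    rw [card_edgesWithin_insert G (by simpa using hvw.ne)]
    simp [edgesWithin, filter_singleton, hvw.2]
  rw [card_edgesWithin_insert G hu, h_pair, add_zero, ← card_pair hvw.ne, card_filter_eq_iff]
  simp

end EdgesWithin

lemma sum_dart_edge {M : Type*} [AddCommMonoid M] [Fintype V] (G : SimpleGraph V)
    [DecidableRel G.Adj] (f : Sym2 V → M) :
    ∑ d : G.Dart, f d.edge = 2 • ∑ e ∈ G.edgeFinset, f e := by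
  rw [← sum_fiberwise_of_maps_to (g := Dart.edge) fun d _ => mem_edgeFinset.2 d.edge_mem,
    smul_sum]
  refine sum_congr rfl fun e he => ?_
  rw [sum_congr rfl fun d hd => congrArg f (mem_filter.1 hd).2, sum_const,
    G.dart_edge_fiber_card e (mem_edgeFinset.1 he)]

lemma edgeFinset_compl_eq_filter [Fintype V] [DecidableEq V] (G : SimpleGraph V)
    [DecidableRel G.Adj] :
    Gᶜ.edgeFinset = ({e | ¬ e.IsDiag ∧ e ∉ G.edgeFinset} : Finset (Sym2 V)) := by
  ext e
  induction e using Sym2.ind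
  simp

lemma card_inter_add_card_product_filter_ne {α : Type*} [DecidableEq α] (s t : Finset α) :
    #(s ∩ t) + #{p ∈ s ×ˢ t | p.1 ≠ p.2} = #s * #t := by
  rw [← card_product, ← card_filter_add_card_filter_not (s := s ×ˢ t) (fun p => p.1 = p.2),
    ← diag_card]
  congr 2
  ext ⟨a, b⟩
  simp only [mem_diag, mem_inter, mem_filter, mem_product]
  grind

section Finite

variable [Fintype V] [DecidableEq V] (G : SimpleGraph V) [DecidableRel G.Adj]

/-- The product `d_u * d_v` of the degrees of the two ends of `s(u, v)`. -/
def degreeProd : Sym2 V → ℕ :=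
  Sym2.lift ⟨fun u v => G.degree u * G.degree v, fun _ _ => mul_comm _ _⟩

/-- The common neighbours of the two ends of `e`. -/
def commonNeighborFinset (e : Sym2 V) : Finset V :=
  {u | ∀ v ∈ e, G.Adj u v}

/-- The vertex sets of the induced paths on three vertices: the triples spanning exactly two
edges. -/
def cherryTriples : Finset (Finset V) :=
  {S ∈ powersetCard 3 univ | #(edgesWithin G S) = 2}

/-- The alternating paths `(u, v, w, x)`, with `uv` and `wx` edges and `vw` a non-edge. -/
def alternatingPaths : Finset (V × V × V × V) :=
  {p | p.1 ≠ p.2.1 ∧ p.1 ≠ p.2.2.1 ∧ p.1 ≠ p.2.2.2 ∧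
    p.2.1 ≠ p.2.2.1 ∧ p.2.1 ≠ p.2.2.2 ∧ p.2.2.1 ≠ p.2.2.2 ∧
    G.Adj p.1 p.2.1 ∧ G.Adj p.2.2.1 p.2.2.2 ∧ ¬ G.Adj p.2.1 p.2.2.1}

variable {G} in
lemma cherryTriples_filter_mem_sym2 {v w : V} (hvw : Gᶜ.Adj v w) :
    {S ∈ cherryTriples G | s(v, w) ∈ S.sym2} =
      (commonNeighborFinset G s(v, w)).image (insert · {v, w}) := by
  ext S
  simp only [cherryTriples, commonNeighborFinset, mem_filter, mem_image, mem_powersetCard_univ,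
    mem_univ, true_and, Sym2.ball, mk_mem_sym2_iff]
  constructor
  · rintro ⟨⟨h_card, h_two⟩, hv, hw⟩
    obtain ⟨u, hu, rfl⟩ : ∃ u, u ∉ ({v, w} : Finset V) ∧ insert u {v, w} = S := by
      refine exists_eq_insert_iff.2 ⟨by simp [insert_subset_iff, hv, hw], ?_⟩
      rw [card_pair hvw.ne, h_card]
    exact ⟨u, (card_edgesWithin_triple_eq_two_iff hvw hu).1 h_two, rfl⟩
  · rintro ⟨u, h_adj, rfl⟩
    have hu : u ∉ ({v, w} : Finset V) := by simp [h_adj.1.ne, h_adj.2.ne]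
    exact ⟨⟨by rw [card_insert_of_notMem hu, card_pair hvw.ne],
      (card_edgesWithin_triple_eq_two_iff hvw hu).2 h_adj⟩, by simp⟩

variable {G} in
lemma card_cherryTriples_filter_mem_sym2 {e : Sym2 V} (he : e ∈ Gᶜ.edgeFinset) :
    #{S ∈ cherryTriples G | e ∈ S.sym2} = #(commonNeighborFinset G e) := by
  induction e using Sym2.ind with
  | _ v w =>
    rw [cherryTriples_filter_mem_sym2 (by simpa using he), card_image_of_injOn]
    refine (insert_inj_on _).mono fun u hu => ?_
    have h_adj : G.Adj u v ∧ G.Adj u w := by simpa [commonNeighborFinset] using hu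
    simp [h_adj.1.ne, h_adj.2.ne]

lemma sum_card_commonNeighborFinset_compl_edgeFinset :
    ∑ e ∈ Gᶜ.edgeFinset, #(commonNeighborFinset G e) = #(cherryTriples G) := by
  rw [← sum_congr rfl fun e he => card_cherryTriples_filter_mem_sym2 he]
  refine (sum_card_bipartiteAbove_eq_sum_card_bipartiteBelow
    fun e (S : Finset V) => e ∈ S.sym2).trans ?_
  refine (sum_congr rfl fun S hS => ?_).trans (card_eq_sum_ones _).symm
  obtain ⟨h_card, h_two⟩ : #S = 3 ∧ #(edgesWithin G S) = 2 := by simpa [cherryTriples] using hS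
  have h_filter : Gᶜ.edgeFinset.bipartiteBelow (fun e S => e ∈ S.sym2) S = edgesWithin Gᶜ S := by
    ext
    simp [bipartiteBelow, edgesWithin, and_comm]
  have h_choose := card_edgesWithin_add_card_edgesWithin_compl G S
  rw [h_card, h_two, Nat.choose_succ_self_right] at h_choose
  rw [h_filter]
  omega

variable {G} in
lemma mem_alternatingPaths_iff {u v w x : V} :
    (u, v, w, x) ∈ alternatingPaths G ↔
      Gᶜ.Adj v w ∧ (G.Adj v u ∧ G.Adj w x) ∧ u ≠ x := by
  -- `u = w` or `v = x` would make the non-edge `vw` one of the edges `uv`, `wx`.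
  simp only [alternatingPaths, mem_filter, mem_univ, true_and, compl_adj]
  grind [SimpleGraph.Adj.ne, SimpleGraph.adj_comm]

lemma sum_dart_compl_card_neighborFinset_product_filter_ne :
    ∑ d : Gᶜ.Dart, #{p ∈ G.neighborFinset d.fst ×ˢ G.neighborFinset d.snd | p.1 ≠ p.2} =
      #(alternatingPaths G) := by
  rw [← card_sigma]
  refine card_bij (fun q _ => (q.2.1, q.1.fst, q.1.snd, q.2.2)) ?_ ?_ ?_
  · rintro ⟨⟨⟨v, w⟩, hvw⟩, u, x⟩ hq
    exact mem_alternatingPaths_iff.2 ⟨hvw, by simpa using hq⟩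
  · rintro ⟨⟨⟨v, w⟩, hvw⟩, u, x⟩ _ ⟨⟨⟨v', w'⟩, hvw'⟩, u', x'⟩ _ h_eq
    obtain ⟨rfl, rfl, rfl, rfl⟩ : u = u' ∧ v = v' ∧ w = w' ∧ x = x' := by simpa using h_eq
    rfl
  · rintro ⟨u, v, w, x⟩ hp
    obtain ⟨hvw, h_ends⟩ := mem_alternatingPaths_iff.1 hp
    exact ⟨⟨⟨(v, w), hvw⟩, (u, x)⟩, by simpa using h_ends, rfl⟩

lemma degreeProd_dart_edge (H : SimpleGraph V) (d : H.Dart) :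
    degreeProd G d.edge = #(commonNeighborFinset G d.edge) +
      #{p ∈ G.neighborFinset d.fst ×ˢ G.neighborFinset d.snd | p.1 ≠ p.2} := by
  have h_inter : commonNeighborFinset G d.edge =
      G.neighborFinset d.fst ∩ G.neighborFinset d.snd := by
    ext
    simp [commonNeighborFinset, Dart.edge, G.adj_comm]
  rw [h_inter, card_inter_add_card_product_filter_ne]
  rfl

theorem stmt_2_general :
    2 * ∑ e ∈ Gᶜ.edgeFinset, degreeProd G e = 2 * #(cherryTriples G) + #(alternatingPaths G) :=
  calc
    2 * ∑ e ∈ Gᶜ.edgeFinset, degreeProd G e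
    _ = ∑ d : Gᶜ.Dart, degreeProd G d.edge := (sum_dart_edge Gᶜ _).symm
    _ = ∑ d : Gᶜ.Dart, #(commonNeighborFinset G d.edge) + #(alternatingPaths G) := by
      simp only [degreeProd_dart_edge, sum_add_distrib,
        sum_dart_compl_card_neighborFinset_product_filter_ne]
    _ = 2 * #(cherryTriples G) + #(alternatingPaths G) := by
      rw [sum_dart_edge Gᶜ (fun e => #(commonNeighborFinset G e)),
        sum_card_commonNeighborFinset_compl_edgeFinset, smul_eq_mul]

end Finite

lemma nonEdgeDegSum_eq_sum_degreeProd {n : ℕ} (G : SimpleGraph (Fin n)) :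
    nonEdgeDegSum G = ∑ e ∈ Gᶜ.edgeFinset, degreeProd G e := by
  rw [edgeFinset_compl_eq_filter]
  rfl

lemma t_eq_card_cherryTriples {n : ℕ} (G : SimpleGraph (Fin n)) : t G = #(cherryTriples G) := by
  have h_edges (S : Finset (Fin n)) :
      {e ∈ G.edgeFinset | ∀ v ∈ e, v ∈ S} = edgesWithin G S := by
    ext
    simp [edgesWithin, and_comm]
  simp only [t, cherryTriples, h_edges]

lemma A_eq_card_alternatingPaths {n : ℕ} (G : SimpleGraph (Fin n)) :
    A G = #(alternatingPaths G) :=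
  rfl

/-- Twice the sum of `d_u d_v` over non-adjacent pairs equals twice the number of
3-sets spanning exactly two edges plus the number of ordered alternating 3-edge paths. -/
theorem stmt_2 (n : ℕ) (G : SimpleGraph (Fin n)) :
    2 * nonEdgeDegSum G = 2 * t G + A G := by
  rw [nonEdgeDegSum_eq_sum_degreeProd, t_eq_card_cherryTriples, A_eq_card_alternatingPaths,
    stmt_2_general]
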